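/- Assume F satisfies Assumption F and that g : ℝ^d → ℝ is bounded. Then the family of discrete-time approximations (v^h) is uniformly bounded: there exists a constant C > 0, independent of n, such that |v^h(t_i, x)| ≤ C for all n ∈ ℕ, all i ∈ {0,…,n} and all x ∈ ℝ^d. -/

import Mathlib

/-! The scheme is bounded because each step is, up to a term of size `O(h)`, an average against
a signed density of total mass one whose negative part is `O(h)`.

For a bounded `ψ`, linearize `F t x 0 · ·` by the mean value theorem on the segment from `(0, 0)`
to `(E[ψ H₁], E[ψ H₂])` (`exists_mean_value`). With `P`, `G` the derivatives at the intermediate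
point, the step becomes `E[ψ Z] + h (F(r,p,γ) - F(0,p,γ)) + h F(0,0,0)`, where
`Z = 1 + h P·H₁ + h ⟨G, H₂⟩`. Writing `u = H₁`, one has `H₂ = u uᵀ - a⁻¹ / h`, hence
`Z = (1 - Tr(a⁻¹ G)) + h (P·u + uᵀ G u) ≥ -h K` (`weight_ge`). Since `H₁` and `H₂` are centered,
`E[Z] = 1`, so `E|Z| ≤ 1 + 2 h K` (`abs_integral_mul_weight_le`). With the Lipschitz constant `L`
in `r` this gives `‖step ψ‖ ≤ ‖ψ‖ (1 + h (2 K + L)) + h C₀` (`abs_step_le`), and a discrete Gronwall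
argument over `n = T / h` steps yields the bound `(Cg + T C₀) exp (T (2 K + L))`, where `Cg` bounds
`g`; adding one makes it positive.
Measurability of the iterates (`measurable_step`) is propagated along the induction. -/

open MeasureTheory ProbabilityTheory Matrix Real Set Function

noncomputable section

attribute [local instance] Matrix.normedAddCommGroup Matrix.normedSpace

abbrev Vec (d : ℕ) := Fin d → ℝ
abbrev Mat (d : ℕ) := Matrix (Fin d) (Fin d) ℝ

/-- Law of the Gaussian vector `W_h` in `ℝ^d`, centered with covariance `h · I_d`. -/
def gaussVec (d : ℕ) (h : ℝ) : Measure (Vec d) :=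
  Measure.pi fun _ => gaussianReal 0 h.toNNReal

/-- One step Euler scheme `X̂_h^{t,x} = x + μ(t,x) h + σ(t,x) W_h`. -/
def euler {d : ℕ} (μ : ℝ → Vec d → Vec d) (σ : ℝ → Vec d → Mat d)
    (h t : ℝ) (x w : Vec d) : Vec d :=
  x + h • μ t x + (σ t x).mulVec w

/-- Weight `H_1^h(t,x) = (σ(t,x)ᵀ)⁻¹ W_h / h`. -/
def H1w {d : ℕ} (σ : ℝ → Vec d → Mat d) (h t : ℝ) (x w : Vec d) : Vec d :=
  (1 / h) • ((σ t x)ᵀ⁻¹.mulVec w)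

/-- Weight `H_2^h(t,x) = (σ(t,x)ᵀ)⁻¹ (W_h W_hᵀ − h I_d) σ(t,x)⁻¹ / h²`. -/
def H2w {d : ℕ} (σ : ℝ → Vec d → Mat d) (h t : ℝ) (x w : Vec d) : Mat d :=
  (1 / h ^ 2) • ((σ t x)ᵀ⁻¹ * (vecMulVec w w - h • (1 : Mat d)) * (σ t x)⁻¹)

/-- One-step operator acting on the next-time function `ψ`. -/
def step {d : ℕ} (F : ℝ → Vec d → ℝ → Vec d → Mat d → ℝ)
    (μ : ℝ → Vec d → Vec d) (σ : ℝ → Vec d → Mat d)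
    (h t : ℝ) (ψ : Vec d → ℝ) (x : Vec d) : ℝ :=
  (∫ w, ψ (euler μ σ h t x w) ∂gaussVec d h)
    + h * F t x (∫ w, ψ (euler μ σ h t x w) ∂gaussVec d h)
        (fun i => ∫ w, ψ (euler μ σ h t x w) * H1w σ h t x w i ∂gaussVec d h)
        (Matrix.of fun i j => ∫ w, ψ (euler μ σ h t x w) * H2w σ h t x w i j ∂gaussVec d h)

/-- The operator `T_h[ψ](t,x)`. -/
def Th {d : ℕ} (F : ℝ → Vec d → ℝ → Vec d → Mat d → ℝ)
    (μ : ℝ → Vec d → Vec d) (σ : ℝ → Vec d → Mat d)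
    (ψ : ℝ → Vec d → ℝ) (h t : ℝ) (x : Vec d) : ℝ :=
  step F μ σ h t (ψ (t + h)) x

/-- Assumption F of the paper, with explicit partial derivatives `Fr, Fp, Fγ` of `F`
in the variables `(r,p,γ)`. -/
structure AssumptionF (d : ℕ) (σ : ℝ → Vec d → Mat d)
    (F : ℝ → Vec d → ℝ → Vec d → Mat d → ℝ)
    (Fr : ℝ → Vec d → ℝ → Vec d → Mat d → ℝ)
    (Fp : ℝ → Vec d → ℝ → Vec d → Mat d → Vec d)
    (Fγ : ℝ → Vec d → ℝ → Vec d → Mat d → Mat d) : Prop where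
  lipschitz : ∃ L : ℝ, 0 ≤ L ∧ ∀ t x x' r r' p p' γ γ',
    |F t x r p γ - F t x' r' p' γ'| ≤ L * (‖x - x'‖ + |r - r'| + ‖p - p'‖ + ‖γ - γ'‖)
  bound_at_zero : ∃ C : ℝ, ∀ t x, |F t x 0 0 0| ≤ C
  differentiable : ∀ t x r p γ, DifferentiableAt ℝ
    (fun q : ℝ × Vec d × Mat d => F t x q.1 q.2.1 q.2.2) (r, p, γ)
  deriv_eq : ∀ t x r p γ (dq : ℝ × Vec d × Mat d),
    fderiv ℝ (fun q : ℝ × Vec d × Mat d => F t x q.1 q.2.1 q.2.2) (r, p, γ) dq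
      = Fr t x r p γ * dq.1 + Fp t x r p γ ⬝ᵥ dq.2.1
        + ∑ i, ∑ j, Fγ t x r p γ i j * dq.2.2 i j
  psd : ∀ t x r p γ, (Fγ t x r p γ).PosSemidef
  trace_le_one : ∀ t x r p γ, ((σ t x * (σ t x)ᵀ)⁻¹ * Fγ t x r p γ).trace ≤ 1
  lower_bound : ∃ K : ℝ, 0 ≤ K ∧ ∀ t x r p γ (w : Vec d),
    Fp t x r p γ ⬝ᵥ w + w ⬝ᵥ (Fγ t x r p γ).mulVec w ≥ -K

/-- The backward scheme: `schemeAux … k` is the approximation with `k` time steps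
remaining before the horizon `T` (so it corresponds to time `T − k·(T/n)`). -/
def schemeAux {d : ℕ} (T : ℝ) (F : ℝ → Vec d → ℝ → Vec d → Mat d → ℝ)
    (μ : ℝ → Vec d → Vec d) (σ : ℝ → Vec d → Mat d) (g : Vec d → ℝ) (n : ℕ) :
    ℕ → Vec d → ℝ
  | 0 => g
  | (k + 1) => step F μ σ (T / n) (T - (k + 1) * (T / n)) (schemeAux T F μ σ g n k)

/-- The discrete time approximation `v^h(t_i, ·)` with `h = T/n` and `t_i = i·T/n`:
`v^h(t_n,·) = g` and `v^h(t_i,·) = T_h[v^h](t_i,·)`. -/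
def vh {d : ℕ} (T : ℝ) (F : ℝ → Vec d → ℝ → Vec d → Mat d → ℝ)
    (μ : ℝ → Vec d → Vec d) (σ : ℝ → Vec d → Mat d) (g : Vec d → ℝ) (n i : ℕ) :
    Vec d → ℝ :=
  schemeAux T F μ σ g n (n - i)

/-! ### Gaussian moments and the Malliavin-type weights -/

instance gaussVec_isProbabilityMeasure (d : ℕ) (h : ℝ) :
    IsProbabilityMeasure (gaussVec d h) := by
  unfold gaussVec; infer_instance

lemma memLp_coord (d : ℕ) (h : ℝ) (i : Fin d) :
    MemLp (fun w : Vec d => w i) 2 (gaussVec d h) :=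
  (memLp_id_gaussianReal' (μ := 0) (v := h.toNNReal) 2 (by simp)).comp_measurePreserving
    (measurePreserving_eval (fun _ : Fin d => gaussianReal 0 h.toNNReal) i)

lemma integrable_coord (d : ℕ) (h : ℝ) (i : Fin d) :
    Integrable (fun w : Vec d => w i) (gaussVec d h) :=
  (memLp_coord d h i).integrable (by norm_num)

lemma integrable_coord_mul (d : ℕ) (h : ℝ) (i j : Fin d) :
    Integrable (fun w : Vec d => w i * w j) (gaussVec d h) :=
  (memLp_coord d h i).integrable_mul (memLp_coord d h j)

lemma integral_coord (d : ℕ) (h : ℝ) (i : Fin d) :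
    ∫ w, w i ∂gaussVec d h = 0 := by
  have := integral_comp_eval (μ := fun _ : Fin d => gaussianReal 0 h.toNNReal) (i := i)
    (f := fun x : ℝ => x) (by fun_prop)
  rw [integral_id_gaussianReal] at this
  exact this

lemma integral_coord_mul (d : ℕ) {h : ℝ} (hh : 0 < h) (i j : Fin d) :
    ∫ w, w i * w j ∂gaussVec d h = h * (1 : Mat d) i j := by
  rcases eq_or_ne i j with rfl | hij
  · have h1 := integral_comp_eval (μ := fun _ : Fin d => gaussianReal 0 h.toNNReal) (i := i)
      (f := fun x : ℝ => x * x) (by fun_prop)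
    have h2 := variance_fun_id_gaussianReal (μ := 0) (v := h.toNNReal)
    rw [variance_eq_integral (by fun_prop), integral_id_gaussianReal] at h2
    simp only [sub_zero, pow_two, Real.coe_toNNReal _ hh.le] at h2
    rw [h2] at h1
    rw [Matrix.one_apply_eq, mul_one]
    exact h1
  · have hind := (iIndepFun_pi (μ := fun _ : Fin d => gaussianReal 0 h.toNNReal)
      (X := fun _ x => x) (fun _ => by fun_prop)).indepFun hij
    have := hind.integral_fun_mul_eq_mul_integral
      (measurable_pi_apply i).aestronglyMeasurable (measurable_pi_apply j).aestronglyMeasurable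
    have h0 := integral_coord d h i
    unfold gaussVec at h0 ⊢
    rw [this, h0]
    simp [hij]

lemma H1w_apply {d : ℕ} (σ : ℝ → Vec d → Mat d) (h t : ℝ) (x w : Vec d) (i : Fin d) :
    H1w σ h t x w i = ∑ k, (1 / h * (σ t x)ᵀ⁻¹ i k) * w k := by
  simp [H1w, mulVec, dotProduct, Finset.mul_sum, mul_assoc]

lemma H2w_apply {d : ℕ} (σ : ℝ → Vec d → Mat d) (h t : ℝ) (x w : Vec d) (i j : Fin d) :
    H2w σ h t x w i j = ∑ l, ∑ k, (1 / h ^ 2 * (σ t x)ᵀ⁻¹ i k * (σ t x)⁻¹ l j)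
      * (w k * w l - h * (1 : Mat d) k l) := by
  simp only [H2w, Matrix.smul_apply, Matrix.mul_apply, Finset.mul_sum, Finset.sum_mul,
    Matrix.sub_apply, vecMulVec_apply, smul_eq_mul]
  refine Finset.sum_congr rfl fun l _ => Finset.sum_congr rfl fun k _ => ?_
  ring

lemma integrable_H1w {d : ℕ} (σ : ℝ → Vec d → Mat d) (h t : ℝ) (x : Vec d) (i : Fin d) :
    Integrable (fun w => H1w σ h t x w i) (gaussVec d h) := by
  simp only [H1w_apply]
  exact integrable_finsetSum _ fun k _ => (integrable_coord d h k).const_mul _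

lemma integral_H1w {d : ℕ} (σ : ℝ → Vec d → Mat d) (h t : ℝ) (x : Vec d) (i : Fin d) :
    ∫ w, H1w σ h t x w i ∂gaussVec d h = 0 := by
  simp only [H1w_apply]
  rw [integral_finsetSum _ fun k _ => (integrable_coord d h k).const_mul _]
  simp [integral_const_mul, integral_coord]

lemma integrable_H2w {d : ℕ} (σ : ℝ → Vec d → Mat d) (h t : ℝ) (x : Vec d) (i j : Fin d) :
    Integrable (fun w => H2w σ h t x w i j) (gaussVec d h) := by
  simp only [H2w_apply]
  exact integrable_finsetSum _ fun l _ => integrable_finsetSum _ fun k _ =>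
    ((integrable_coord_mul d h k l).sub (integrable_const _)).const_mul _

lemma integral_H2w {d : ℕ} (σ : ℝ → Vec d → Mat d) {h : ℝ} (hh : 0 < h) (t : ℝ) (x : Vec d)
    (i j : Fin d) : ∫ w, H2w σ h t x w i j ∂gaussVec d h = 0 := by
  have hI (k l : Fin d) : Integrable (fun w : Vec d => w k * w l - h * (1 : Mat d) k l)
      (gaussVec d h) := (integrable_coord_mul d h k l).sub (integrable_const _)
  have h0 (k l : Fin d) : ∫ w, (w k * w l - h * (1 : Mat d) k l) ∂gaussVec d h = 0 := by
    rw [integral_sub (integrable_coord_mul d h k l) (integrable_const _),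
      integral_coord_mul d hh]
    simp
  simp only [H2w_apply]
  rw [integral_finsetSum _ fun l _ => integrable_finsetSum _ fun k _ => (hI k l).const_mul _]
  refine Finset.sum_eq_zero fun l _ => ?_
  rw [integral_finsetSum _ fun k _ => (hI k l).const_mul _]
  refine Finset.sum_eq_zero fun k _ => ?_
  rw [integral_const_mul, h0, mul_zero]

/-! ### The one-step density -/

/-- The random weight `1 + h P·H₁ + h ⟨G, H₂⟩` against which the next-time value is averaged
once `F` has been linearized with gradient `P` in `p` and `G` in `γ`. -/
def weight {d : ℕ} (σ : ℝ → Vec d → Mat d) (h t : ℝ) (x : Vec d) (P : Vec d) (G : Mat d)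
    (w : Vec d) : ℝ :=
  1 + h * (P ⬝ᵥ H1w σ h t x w) + h * ∑ i, ∑ j, G i j * H2w σ h t x w i j

lemma H2w_eq {d : ℕ} (σ : ℝ → Vec d → Mat d) {h : ℝ} (hh : 0 < h) (t : ℝ) (x w : Vec d) :
    H2w σ h t x w = vecMulVec (H1w σ h t x w) (H1w σ h t x w)
      - (1 / h) • (σ t x * (σ t x)ᵀ)⁻¹ := by
  have h1 : vecMulVec ((σ t x)ᵀ⁻¹ *ᵥ w) ((σ t x)ᵀ⁻¹ *ᵥ w)
      = (σ t x)ᵀ⁻¹ * vecMulVec w w * (σ t x)⁻¹ := by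
    rw [Matrix.mul_vecMulVec, Matrix.vecMulVec_mul, ← Matrix.mulVec_transpose,
      Matrix.transpose_nonsing_inv]
  rw [H2w, H1w, Matrix.vecMulVec_smul, Matrix.smul_vecMulVec, h1, Matrix.mul_inv_rev,
    Matrix.mul_sub, Matrix.sub_mul, smul_sub, smul_smul]
  congr 1
  · congr 1; field_simp
  · simp only [Matrix.mul_smul, Matrix.smul_mul, Matrix.mul_one, smul_smul]
    congr 1; field_simp

/-- With `u = H₁`, the weight equals
`(1 - Tr(a⁻¹ G)) + h (P·u + uᵀ G u)`, a nonnegative number plus a quantity at least `-h K`. -/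
lemma weight_ge {d : ℕ} (σ : ℝ → Vec d → Mat d) {h : ℝ} (hh : 0 < h) (t : ℝ) (x : Vec d)
    {P : Vec d} {G : Mat d} {K : ℝ} (hG : G.PosSemidef)
    (htr : ((σ t x * (σ t x)ᵀ)⁻¹ * G).trace ≤ 1)
    (hK : ∀ u : Vec d, P ⬝ᵥ u + u ⬝ᵥ G.mulVec u ≥ -K) (w : Vec d) :
    -(h * K) ≤ weight σ h t x P G w := by
  have key : weight σ h t x P G w = 1 - ((σ t x * (σ t x)ᵀ)⁻¹ * G).trace
      + h * (P ⬝ᵥ H1w σ h t x w + H1w σ h t x w ⬝ᵥ G.mulVec (H1w σ h t x w)) := by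
    have e1 : ((σ t x * (σ t x)ᵀ)⁻¹ * G).trace
        = h * ∑ i, ∑ j, G i j * ((1 / h) * (σ t x * (σ t x)ᵀ)⁻¹ i j) := by
      simp only [Matrix.trace, Matrix.diag_apply, Matrix.mul_apply, Finset.mul_sum]
      refine Finset.sum_congr rfl fun i _ => Finset.sum_congr rfl fun j _ => ?_
      have : G j i = G i j := by simpa using hG.1.apply i j
      rw [this]; field_simp
    have e2 : ∀ u : Vec d, u ⬝ᵥ G.mulVec u = ∑ i, ∑ j, G i j * (u i * u j) := by
      intro u
      simp only [dotProduct, mulVec, Finset.mul_sum]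
      refine Finset.sum_congr rfl fun i _ => Finset.sum_congr rfl fun j _ => ?_
      ring
    rw [e1, e2, weight, H2w_eq σ hh]
    simp only [Matrix.sub_apply, vecMulVec_apply, Matrix.smul_apply, smul_eq_mul, mul_sub,
      Finset.sum_sub_distrib]
    ring
  rw [key]
  nlinarith [hK (H1w σ h t x w)]

lemma integral_mul_weight {d : ℕ} (σ : ℝ → Vec d → Mat d) (h t : ℝ) (x : Vec d)
    (P : Vec d) (G : Mat d) {φ : Vec d → ℝ} (hφ : Measurable φ) {M : ℝ} (hM : ∀ w, |φ w| ≤ M) :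
    Integrable (fun w => φ w * weight σ h t x P G w) (gaussVec d h) ∧
    ∫ w, φ w * weight σ h t x P G w ∂gaussVec d h = ∫ w, φ w ∂gaussVec d h
      + h * ∑ i, P i * ∫ w, φ w * H1w σ h t x w i ∂gaussVec d h
      + h * ∑ i, ∑ j, G i j * ∫ w, φ w * H2w σ h t x w i j ∂gaussVec d h := by
  have hb {f : Vec d → ℝ} (hf : Integrable f (gaussVec d h)) :
      Integrable (fun w => φ w * f w) (gaussVec d h) :=
    hf.bdd_mul hφ.aestronglyMeasurable (ae_of_all _ hM)
  have i0 : Integrable φ (gaussVec d h) := by simpa using hb (integrable_const (1 : ℝ))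
  have i1 (i) := hb (integrable_H1w σ h t x i)
  have i2 (i j) := hb (integrable_H2w σ h t x i j)
  have j1 : Integrable (fun w => h * ∑ i, P i * (φ w * H1w σ h t x w i)) (gaussVec d h) :=
    (integrable_finsetSum _ fun i _ => (i1 i).const_mul _).const_mul _
  have j2 : Integrable (fun w => h * ∑ i, ∑ j, G i j * (φ w * H2w σ h t x w i j))
      (gaussVec d h) :=
    (integrable_finsetSum _ fun i _ => integrable_finsetSum _ fun j _ =>
      (i2 i j).const_mul _).const_mul _
  have e : (fun w => φ w * weight σ h t x P G w) = fun w =>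
      φ w + h * ∑ i, P i * (φ w * H1w σ h t x w i)
        + h * ∑ i, ∑ j, G i j * (φ w * H2w σ h t x w i j) := by
    funext w
    simp only [weight, dotProduct, mul_add, mul_one, Finset.mul_sum]
    congr 1
    · congr 1
      exact Finset.sum_congr rfl fun i _ => by ring
    · exact Finset.sum_congr rfl fun i _ => Finset.sum_congr rfl fun j _ => by ring
  rw [e]
  refine ⟨(i0.add j1).add j2, ?_⟩
  have j3 (i : Fin d) : Integrable (fun w => ∑ j, G i j * (φ w * H2w σ h t x w i j))
      (gaussVec d h) := integrable_finsetSum _ fun j _ => (i2 i j).const_mul _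
  have j01 : Integrable (fun w => φ w + h * ∑ i, P i * (φ w * H1w σ h t x w i))
      (gaussVec d h) := i0.add j1
  rw [integral_add j01 j2, integral_add i0 j1, integral_const_mul, integral_const_mul,
    integral_finsetSum _ fun i _ => (i1 i).const_mul _, integral_finsetSum _ fun i _ => j3 i]
  simp only [integral_const_mul]
  congr 2
  refine Finset.sum_congr rfl fun i _ => ?_
  rw [integral_finsetSum _ fun j _ => (i2 i j).const_mul _]
  simp only [integral_const_mul]

/-- The weight has mean one and is at least `-h K`, so its `L¹` norm is at most `1 + 2 h K`. -/
lemma abs_integral_mul_weight_le {d : ℕ} (σ : ℝ → Vec d → Mat d) {h : ℝ} (hh : 0 < h) (t : ℝ)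
    (x : Vec d) {P : Vec d} {G : Mat d} {K : ℝ} (hK0 : 0 ≤ K) (hG : G.PosSemidef)
    (htr : ((σ t x * (σ t x)ᵀ)⁻¹ * G).trace ≤ 1)
    (hK : ∀ u : Vec d, P ⬝ᵥ u + u ⬝ᵥ G.mulVec u ≥ -K)
    {φ : Vec d → ℝ} {M : ℝ} (hM : ∀ w, |φ w| ≤ M) :
    |∫ w, φ w * weight σ h t x P G w ∂gaussVec d h| ≤ M * (1 + 2 * (h * K)) := by
  obtain ⟨iZ, eZ⟩ := integral_mul_weight σ h t x P G (φ := fun _ => 1) measurable_const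
    (M := 1) (by simp)
  simp only [one_mul, integral_H1w, integral_H2w σ hh, mul_zero, Finset.sum_const_zero,
    add_zero, integral_const, probReal_univ, smul_eq_mul] at iZ eZ
  have hM0 : 0 ≤ M := (abs_nonneg _).trans (hM 0)
  have hhK : 0 ≤ h * K := by positivity
  rw [← Real.norm_eq_abs]
  calc _ ≤ ∫ w, M * (weight σ h t x P G w + 2 * (h * K)) ∂gaussVec d h := by
        refine norm_integral_le_of_norm_le ((iZ.add (integrable_const _)).const_mul _)
          (ae_of_all _ fun w => ?_)
        rw [norm_mul]
        have h1 := weight_ge σ hh t x hG htr hK w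
        refine mul_le_mul (hM w) ?_ (norm_nonneg _) hM0
        rw [Real.norm_eq_abs, abs_le]
        constructor <;> linarith
    _ = _ := by
        rw [integral_const_mul, integral_add iZ (integrable_const _), eZ]
        simp

/-! ### The one-step estimate -/

/-- Mean value theorem for `F` along the segment from `(r, 0, 0)` to `(r, p, γ)`. -/
lemma exists_mean_value {d : ℕ} {σ : ℝ → Vec d → Mat d}
    {F Fr : ℝ → Vec d → ℝ → Vec d → Mat d → ℝ}
    {Fp : ℝ → Vec d → ℝ → Vec d → Mat d → Vec d}
    {Fγ : ℝ → Vec d → ℝ → Vec d → Mat d → Mat d} (hF : AssumptionF d σ F Fr Fp Fγ)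
    (t : ℝ) (x : Vec d) (r : ℝ) (p : Vec d) (γ : Mat d) :
    ∃ c : ℝ, F t x r p γ - F t x r 0 0 = Fp t x r (c • p) (c • γ) ⬝ᵥ p
      + ∑ i, ∑ j, Fγ t x r (c • p) (c • γ) i j * γ i j := by
  have hd (s : ℝ) : HasDerivAt (fun s : ℝ => F t x r (s • p) (s • γ))
      (Fp t x r (s • p) (s • γ) ⬝ᵥ p
        + ∑ i, ∑ j, Fγ t x r (s • p) (s • γ) i j * γ i j) s := by
    have h1 := (hF.differentiable t x r (s • p) (s • γ)).hasFDerivAt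
    have h2 : HasDerivAt (fun s : ℝ => ((r, s • p, s • γ) : ℝ × Vec d × Mat d)) (0, p, γ) s := by
      refine (hasDerivAt_const s r).prodMk (HasDerivAt.prodMk ?_ ?_)
      · simpa using (hasDerivAt_id s).smul_const p
      · simpa using (hasDerivAt_id s).smul_const γ
    have h3 := h1.comp_hasDerivAt s h2
    exact h3.congr_deriv ((hF.deriv_eq t x r (s • p) (s • γ) (0, p, γ)).trans (by simp))
  obtain ⟨c, -, hc⟩ := exists_hasDerivAt_eq_slope (fun s : ℝ => F t x r (s • p) (s • γ)) _
    zero_lt_one (fun s _ => (hd s).continuousAt.continuousWithinAt) (fun s _ => hd s)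
  exact ⟨c, by simpa using hc.symm⟩

lemma measurable_euler {d : ℕ} {μ : ℝ → Vec d → Vec d} {σ : ℝ → Vec d → Mat d}
    (hμ : ∀ i, Measurable fun q : ℝ × Vec d => μ q.1 q.2 i)
    (hσ : ∀ i j, Measurable fun q : ℝ × Vec d => σ q.1 q.2 i j) (h t : ℝ) :
    Measurable fun q : Vec d × Vec d => euler μ σ h t q.1 q.2 := by
  have h1 (i) : Measurable fun q : Vec d × Vec d => μ t q.1 i :=
    (hμ i).comp (measurable_const.prodMk measurable_fst)
  have h2 (i j) : Measurable fun q : Vec d × Vec d => σ t q.1 i j :=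
    (hσ i j).comp (measurable_const.prodMk measurable_fst)
  refine measurable_pi_lambda _ fun i => ?_
  simp only [euler, Pi.add_apply, Pi.smul_apply, mulVec, dotProduct, smul_eq_mul]
  fun_prop

/-- One step enlarges the sup norm by at most a factor `1 + O(h)` and a term `O(h)`, with constants
that depend on `F` only. -/
lemma abs_step_le {d : ℕ} {μ : ℝ → Vec d → Vec d} {σ : ℝ → Vec d → Mat d}
    (hμ : ∀ i, Measurable fun q : ℝ × Vec d => μ q.1 q.2 i)
    (hσ : ∀ i j, Measurable fun q : ℝ × Vec d => σ q.1 q.2 i j)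
    {F Fr : ℝ → Vec d → ℝ → Vec d → Mat d → ℝ}
    {Fp : ℝ → Vec d → ℝ → Vec d → Mat d → Vec d}
    {Fγ : ℝ → Vec d → ℝ → Vec d → Mat d → Mat d} (hF : AssumptionF d σ F Fr Fp Fγ)
    {L K C₀ : ℝ} (hL0 : 0 ≤ L) (hK0 : 0 ≤ K)
    (hL : ∀ t x x' r r' p p' γ γ',
      |F t x r p γ - F t x' r' p' γ'| ≤ L * (‖x - x'‖ + |r - r'| + ‖p - p'‖ + ‖γ - γ'‖))
    (hC : ∀ t x, |F t x 0 0 0| ≤ C₀)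
    (hK : ∀ t x r p γ (w : Vec d),
      Fp t x r p γ ⬝ᵥ w + w ⬝ᵥ (Fγ t x r p γ).mulVec w ≥ -K)
    {h : ℝ} (hh : 0 < h) (t : ℝ) {ψ : Vec d → ℝ} (hψ : Measurable ψ) {M : ℝ}
    (hM : ∀ y, |ψ y| ≤ M) (x : Vec d) :
    |step F μ σ h t ψ x| ≤ M * (1 + h * (2 * K + L)) + h * C₀ := by
  have hφ : Measurable fun w => ψ (euler μ σ h t x w) :=
    hψ.comp ((measurable_euler hμ hσ h t).comp (measurable_const.prodMk measurable_id))
  have hφM (w : Vec d) : |ψ (euler μ σ h t x w)| ≤ M := hM _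
  rw [step]
  set r := ∫ w, ψ (euler μ σ h t x w) ∂gaussVec d h with hr
  set p : Vec d := fun i => ∫ w, ψ (euler μ σ h t x w) * H1w σ h t x w i ∂gaussVec d h with hp
  set γ : Mat d := Matrix.of fun i j =>
    ∫ w, ψ (euler μ σ h t x w) * H2w σ h t x w i j ∂gaussVec d h with hγ
  have hrM : |r| ≤ M := by
    have := norm_integral_le_of_norm_le_const (μ := gaussVec d h) 
      (f := fun w => ψ (euler μ σ h t x w)) (ae_of_all _ hφM)
    simpa using this
  obtain ⟨c, hc⟩ := exists_mean_value hF t x 0 p γ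
  set P := Fp t x 0 (c • p) (c • γ)
  set G := Fγ t x 0 (c • p) (c • γ)
  have hint := (integral_mul_weight σ h t x P G hφ hφM).2
  have hle := abs_integral_mul_weight_le σ hh t x hK0 (hF.psd t x 0 (c • p) (c • γ))
    (hF.trace_le_one t x 0 (c • p) (c • γ)) (hK t x 0 (c • p) (c • γ)) hφM
  have hlip : |F t x r p γ - F t x 0 p γ| ≤ L * M := by
    refine (hL t x x r 0 p p γ γ).trans ?_
    simpa using mul_le_mul_of_nonneg_left hrM hL0
  have hsplit : r + h * F t x r p γ = (r + h * (P ⬝ᵥ p) + h * ∑ i, ∑ j, G i j * γ i j)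
      + h * (F t x r p γ - F t x 0 p γ) + h * F t x 0 0 0 := by
    linear_combination h * hc
  have hint' : r + h * (P ⬝ᵥ p) + h * ∑ i, ∑ j, G i j * γ i j
      = ∫ w, ψ (euler μ σ h t x w) * weight σ h t x P G w ∂gaussVec d h := hint.symm
  rw [hsplit, hint']
  refine (abs_add_three _ _ _).trans ?_
  rw [abs_mul, abs_mul, abs_of_pos hh]
  nlinarith [mul_le_mul_of_nonneg_left hlip hh.le, mul_le_mul_of_nonneg_left (hC t x) hh.le]

/-- Measurability of the iterates, which keeps all expectations in the scheme meaningful.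
Only continuity of `F t` is available, so `t` stays fixed. -/
lemma measurable_step {d : ℕ} {μ : ℝ → Vec d → Vec d} {σ : ℝ → Vec d → Mat d}
    (hμ : ∀ i, Measurable fun q : ℝ × Vec d => μ q.1 q.2 i)
    (hσ : ∀ i j, Measurable fun q : ℝ × Vec d => σ q.1 q.2 i j)
    {F : ℝ → Vec d → ℝ → Vec d → Mat d → ℝ} {L : ℝ} (hL0 : 0 ≤ L)
    (hL : ∀ t x x' r r' p p' γ γ',
      |F t x r p γ - F t x' r' p' γ'| ≤ L * (‖x - x'‖ + |r - r'| + ‖p - p'‖ + ‖γ - γ'‖))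
    (h t : ℝ) {ψ : Vec d → ℝ} (hψ : Measurable ψ) :
    Measurable (step F μ σ h t ψ) := by
  have hφ := hψ.comp (measurable_euler hμ hσ h t)
  have hinv : ∀ i j, Measurable fun x : Vec d => (σ t x)⁻¹ i j := by
    intro i j
    have hσt : Measurable fun x : Vec d => (fun i j => σ t x i j : Fin d → Fin d → ℝ) :=
      measurable_pi_lambda _ fun i => measurable_pi_lambda _ fun j =>
        (hσ i j).comp (measurable_const.prodMk measurable_id)
    have c0 : Continuous fun A : Fin d → Fin d → ℝ => (Matrix.of A : Mat d) := continuous_id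
    have hdet := c0.matrix_det.measurable.comp hσt
    have hadj := (c0.matrix_adjugate.matrix_elem i j).measurable.comp hσt
    simp only [Matrix.inv_def, Ring.inverse_eq_inv', Matrix.smul_apply, smul_eq_mul]
    exact hdet.inv.mul hadj
  have m0 : Measurable fun x => ∫ w, ψ (euler μ σ h t x w) ∂gaussVec d h :=
    (hφ.stronglyMeasurable.integral_prod_right' (ν := gaussVec d h)).measurable
  have m1 (i) : Measurable fun x =>
      ∫ w, ψ (euler μ σ h t x w) * H1w σ h t x w i ∂gaussVec d h := by
    have : Measurable fun q : Vec d × Vec d => H1w σ h t q.1 q.2 i := by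
      simp only [H1w_apply, ← Matrix.transpose_nonsing_inv, Matrix.transpose_apply]
      have hinv' (i j) : Measurable fun q : Vec d × Vec d => (σ t q.1)⁻¹ i j :=
        (hinv i j).comp measurable_fst
      exact Finset.measurable_sum _ fun k _ =>
        ((hinv' k i).const_mul _).mul ((measurable_pi_apply k).comp measurable_snd)
    exact ((hφ.mul this).stronglyMeasurable.integral_prod_right' (ν := gaussVec d h)).measurable
  have m2 (i j) : Measurable fun x =>
      ∫ w, ψ (euler μ σ h t x w) * H2w σ h t x w i j ∂gaussVec d h := by
    have : Measurable fun q : Vec d × Vec d => H2w σ h t q.1 q.2 i j := by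
      simp only [H2w_apply, ← Matrix.transpose_nonsing_inv, Matrix.transpose_apply]
      have hinv' (i j) : Measurable fun q : Vec d × Vec d => (σ t q.1)⁻¹ i j :=
        (hinv i j).comp measurable_fst
      exact Finset.measurable_sum _ fun l _ => Finset.measurable_sum _ fun k _ =>
        (((hinv' k i).const_mul _).mul (hinv' l j)).mul
          ((((measurable_pi_apply k).comp measurable_snd).mul
            ((measurable_pi_apply l).comp measurable_snd)).sub_const _)
    exact ((hφ.mul this).stronglyMeasurable.integral_prod_right' (ν := gaussVec d h)).measurable
  have hcont : Continuous fun q : Vec d × ℝ × Vec d × (Fin d → Fin d → ℝ) =>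
      F t q.1 q.2.1 q.2.2.1 (Matrix.of q.2.2.2) := by
    refine (LipschitzWith.of_dist_le_mul (K := (4 * L).toNNReal) fun q q' => ?_).continuous
    rw [Real.dist_eq, Real.coe_toNNReal _ (by positivity)]
    refine (hL t _ _ _ _ _ _ _ _).trans ?_
    have a1 : ‖q.1 - q'.1‖ ≤ dist q q' := by
      rw [dist_eq_norm]; exact norm_fst_le (q - q')
    have a2 : |q.2.1 - q'.2.1| ≤ dist q q' := by
      rw [dist_eq_norm]; exact (norm_fst_le (q - q').2).trans (norm_snd_le (q - q'))
    have a3 : ‖q.2.2.1 - q'.2.2.1‖ ≤ dist q q' := by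
      rw [dist_eq_norm]
      exact (norm_fst_le (q - q').2.2).trans
        ((norm_snd_le (q - q').2).trans (norm_snd_le (q - q')))
    have a4 : ‖Matrix.of q.2.2.2 - Matrix.of q'.2.2.2‖ ≤ dist q q' := by
      rw [dist_eq_norm]
      exact (norm_snd_le (q - q').2.2).trans
        ((norm_snd_le (q - q').2).trans (norm_snd_le (q - q')))
    nlinarith
  have m3 := hcont.measurable.comp (measurable_id.prodMk (m0.prodMk
    ((measurable_pi_lambda _ m1).prodMk
      (measurable_pi_lambda _ fun i => measurable_pi_lambda _ (m2 i)))))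
  exact m0.add (m3.const_mul h)

/-! ### Discrete Gronwall -/

/-- Uniform boundedness of the discrete-time approximation (Lemma 3.14 of the paper):
for bounded terminal data `g`, the family `(v^h)` is bounded uniformly in `h = T/n`. -/
theorem scheme_uniformly_bounded
    (d : ℕ) (T : ℝ) (hT : 0 < T)
    (μ : ℝ → Vec d → Vec d) (σ : ℝ → Vec d → Mat d)
    (hμmeas : ∀ i, Measurable fun q : ℝ × Vec d => μ q.1 q.2 i)
    (hσmeas : ∀ i j, Measurable fun q : ℝ × Vec d => σ q.1 q.2 i j)
    (hμbdd : ∃ C : ℝ, ∀ s y, ‖μ s y‖ ≤ C)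
    (hσbdd : ∃ C : ℝ, ∀ s y, ‖σ s y‖ ≤ C)
    (hσinv : ∀ s y, IsUnit (σ s y).det)
    (F Fr : ℝ → Vec d → ℝ → Vec d → Mat d → ℝ)
    (Fp : ℝ → Vec d → ℝ → Vec d → Mat d → Vec d)
    (Fγ : ℝ → Vec d → ℝ → Vec d → Mat d → Mat d)
    (hF : AssumptionF d σ F Fr Fp Fγ)
    (g : Vec d → ℝ) (hgmeas : Measurable g) (hgbdd : ∃ Cg : ℝ, ∀ x, |g x| ≤ Cg) :
    ∃ C > (0 : ℝ), ∀ n : ℕ, 0 < n → ∀ i : ℕ, i ≤ n → ∀ x : Vec d,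
      |vh T F μ σ g n i x| ≤ C := by
  obtain ⟨L, hL0, hL⟩ := hF.lipschitz
  obtain ⟨C₀, hC⟩ := hF.bound_at_zero
  obtain ⟨K, hK0, hK⟩ := hF.lower_bound
  obtain ⟨Cg, hg⟩ := hgbdd
  have hC0 : 0 ≤ C₀ := (abs_nonneg _).trans (hC 0 0)
  have hCg : 0 ≤ Cg := (abs_nonneg _).trans (hg 0)
  set A := 2 * K + L with hA
  have hA0 : 0 ≤ A := by positivity
  refine ⟨(Cg + T * C₀) * exp (T * A) + 1, by positivity, fun n hn i _ x => ?_⟩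
  have hn' : (0 : ℝ) < n := by exact_mod_cast hn
  set h := T / n with hh_def
  have hh : 0 < h := by positivity
  have hnh : n * h = T := by rw [hh_def]; field_simp
  have q1 : 1 ≤ 1 + h * A := by nlinarith [mul_nonneg hh.le hA0]
  have main : ∀ k : ℕ, Measurable (schemeAux T F μ σ g n k) ∧
      ∀ y, |schemeAux T F μ σ g n k y| ≤ (Cg + k * h * C₀) * (1 + h * A) ^ k := by
    intro k
    induction k with
    | zero => exact ⟨hgmeas, fun y => by simpa [schemeAux] using hg y⟩
    | succ k ih =>
      refine ⟨measurable_step hμmeas hσmeas hL0 hL _ _ ih.1, fun y => ?_⟩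
      refine (abs_step_le hμmeas hσmeas hF hL0 hK0 hL hC hK hh _ ih.1 ih.2 y).trans ?_
      have : h * C₀ ≤ h * C₀ * (1 + h * A) ^ (k + 1) :=
        le_mul_of_one_le_right (by positivity) (one_le_pow₀ q1)
      push_cast
      rw [← hA]
      calc _ ≤ (Cg + k * h * C₀) * (1 + h * A) ^ k * (1 + h * A)
              + h * C₀ * (1 + h * A) ^ (k + 1) := by linarith
        _ = _ := by ring
  refine ((main (n - i)).2 x).trans ?_
  have hk : ((n - i : ℕ) : ℝ) ≤ n := by exact_mod_cast Nat.sub_le n i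
  have e1 : (1 + h * A) ^ (n - i) ≤ exp (T * A) :=
    calc (1 + h * A) ^ (n - i) ≤ (1 + h * A) ^ n := pow_le_pow_right₀ q1 (Nat.sub_le n i)
      _ ≤ (exp (h * A)) ^ n :=
          pow_le_pow_left₀ (by linarith) (by linarith [add_one_le_exp (h * A)]) n
      _ = exp (T * A) := by rw [← exp_nat_mul, ← mul_assoc, hnh]
  have e2 : Cg + (n - i : ℕ) * h * C₀ ≤ Cg + T * C₀ := by
    rw [← hnh]; gcongr
  have := mul_le_mul e2 e1 (by positivity) (by positivity)
  linarith

end
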